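/- arXiv:2605.25238 — 2 statements merged into one kernel-verified Lean document; each statement's English description precedes it below -/
import Mathlib

section
/- Let p ∈ (2,∞). There exist constants c, C > 0 depending only on p such that for all t ∈ [0,1] and all z ∈ ℂ one has c·t^{p/2}·|z−1|^p ≤ |z−t|^p − (1−t)^{p−1}·(|z|^p − t) ≤ C·t·|z−1|^2·(|z−t| + 1 − t)^{p−2}. -/
noncomputable section

/-!
For `p ≥ 2` let `B x y = ‖x‖ ^ p - ‖y‖ ^ p - p ‖y‖ ^ (p - 2) ⟪y, x - y⟫` be the Bregman divergence
of `‖·‖ ^ p` on an inner product space. The middle term of the theorem, with an arbitrary vector `e`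
in place of `1`, is exactly
`B (z - t e) ((1 - t) z) + t (1 - t) ^ (p - 1) B e z`,
because the two first-order terms cancel. It remains to bound `B` from both sides. Clarkson's
inequality and `B ≥ 0` give `2 ^ (1 - p) ‖x - y‖ ^ p ≤ B x y`. Conversely,
`B x y + B y x = p ⟪‖x‖ ^ (p - 2) x - ‖y‖ ^ (p - 2) y, x - y⟫`, and `x ↦ ‖x‖ ^ (p - 2) x` is
Lipschitz on balls, so `B x y ≤ p (p - 1) max ‖x‖ ‖y‖ ^ (p - 2) ‖x - y‖ ^ 2`.
-/

section Real

variable {q r t x y : ℝ}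

lemma rpow_add_mul_rpow_sub_one_mul_sub_le_rpow (hq : 1 ≤ q) (hx : 0 ≤ x) (hy : 0 ≤ y) :
    x ^ q + q * x ^ (q - 1) * (y - x) ≤ y ^ q := by
  rcases hx.eq_or_lt with rfl | hx
  · rcases hq.eq_or_lt with rfl | hq
    · simp
    · rw [Real.zero_rpow (by linarith), Real.zero_rpow (by linarith)]
      simpa using Real.rpow_nonneg hy q
  · have bernoulli := one_add_mul_self_le_rpow_one_add
      (show -1 ≤ y / x - 1 by linarith [div_nonneg hy hx.le]) hq
    rw [add_sub_cancel, Real.div_rpow hy hx.le, le_div_iff₀ (Real.rpow_pos_of_pos hx q)]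
      at bernoulli
    calc x ^ q + q * x ^ (q - 1) * (y - x) = (1 + q * (y / x - 1)) * x ^ q := by
          rw [Real.rpow_sub_one hx.ne']; field_simp
      _ ≤ y ^ q := bernoulli

lemma half_add_rpow_le (hq : 1 ≤ q) (hx : 0 ≤ x) (hy : 0 ≤ y) :
    ((x + y) / 2) ^ q ≤ (x ^ q + y ^ q) / 2 := by
  have midpoint_le := (convexOn_rpow hq).2 hx hy (one_half_pos (α := ℝ)).le
    (one_half_pos (α := ℝ)).le (add_halves 1)
  simp only [smul_eq_mul] at midpoint_le
  calc ((x + y) / 2) ^ q = (1 / 2 * x + 1 / 2 * y) ^ q := by congr 1; ring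
    _ ≤ 1 / 2 * x ^ q + 1 / 2 * y ^ q := midpoint_le
    _ = (x ^ q + y ^ q) / 2 := by ring

lemma two_rpow_one_sub_le_rpow_add_one_sub_rpow (hq : 1 ≤ q) (ht : 0 ≤ t) (ht1 : t ≤ 1) :
    2 ^ (1 - q) ≤ t ^ q + (1 - t) ^ q := by
  have hhalf := half_add_rpow_le hq ht (sub_nonneg.2 ht1)
  rw [add_sub_cancel, Real.div_rpow zero_le_one zero_le_two, Real.one_rpow] at hhalf
  rw [Real.rpow_sub two_pos, Real.rpow_one]
  linarith [show (2 : ℝ) / 2 ^ q = 2 * (1 / 2 ^ q) by ring]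

lemma mul_rpow_sub_rpow_le (hr : 0 ≤ r) (hx : 0 ≤ x) (hy : 0 ≤ y) :
    y * (x ^ r - y ^ r) ≤ r * x ^ r * (x - y) := by
  have tangent := rpow_add_mul_rpow_sub_one_mul_sub_le_rpow (show 1 ≤ r + 1 by linarith) hx hy
  rw [add_sub_cancel_right, Real.rpow_add_one' hx (by linarith),
    Real.rpow_add_one' hy (by linarith)] at tangent
  linarith

end Real

lemma norm_rpow_smul_sub_norm_rpow_smul_le {E : Type*} [SeminormedAddCommGroup E] [NormedSpace ℝ E]
    {r : ℝ} (hr : 0 ≤ r) (x y : E) :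
    ‖‖x‖ ^ r • x - ‖y‖ ^ r • y‖ ≤ (r + 1) * max ‖x‖ ‖y‖ ^ r * ‖x - y‖ := by
  wlog hyx : ‖y‖ ≤ ‖x‖ generalizing x y
  · rw [norm_sub_rev, max_comm, norm_sub_rev x]
    exact this y x (le_of_not_ge hyx)
  have hpow : 0 ≤ ‖x‖ ^ r - ‖y‖ ^ r :=
    sub_nonneg.2 (Real.rpow_le_rpow (norm_nonneg y) hyx hr)
  rw [max_eq_left hyx]
  calc ‖‖x‖ ^ r • x - ‖y‖ ^ r • y‖
      = ‖‖x‖ ^ r • (x - y) + (‖x‖ ^ r - ‖y‖ ^ r) • y‖ := by congr 1; module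
    _ ≤ ‖x‖ ^ r * ‖x - y‖ + ‖y‖ * (‖x‖ ^ r - ‖y‖ ^ r) := by
      refine (norm_add_le _ _).trans_eq ?_
      rw [norm_smul, norm_smul, Real.norm_of_nonneg (by positivity), Real.norm_of_nonneg hpow,
        mul_comm ‖y‖]
    _ ≤ ‖x‖ ^ r * ‖x - y‖ + r * ‖x‖ ^ r * ‖x - y‖ := by
      grw [mul_rpow_sub_rpow_le hr (norm_nonneg x) (norm_nonneg y), norm_sub_norm_le x y]
    _ = (r + 1) * ‖x‖ ^ r * ‖x - y‖ := by ring

section InnerProductSpace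

open scoped RealInnerProductSpace

variable {E : Type*} [SeminormedAddCommGroup E] [InnerProductSpace ℝ E] {p t : ℝ}

lemma clarkson_norm_rpow_le (hp : 2 ≤ p) (x y : E) :
    ‖(2⁻¹ : ℝ) • (x + y)‖ ^ p + ‖(2⁻¹ : ℝ) • (x - y)‖ ^ p ≤ (‖x‖ ^ p + ‖y‖ ^ p) / 2 := by
  have hp2 : 1 ≤ p / 2 := by linarith
  have sq_rpow (v : E) : (‖v‖ ^ 2) ^ (p / 2) = ‖v‖ ^ p := by
    rw [← Real.rpow_natCast_mul (norm_nonneg v)]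
    congr 1
    push_cast
    ring
  have parallelogram :
      ‖(2⁻¹ : ℝ) • (x + y)‖ ^ 2 + ‖(2⁻¹ : ℝ) • (x - y)‖ ^ 2 = (‖x‖ ^ 2 + ‖y‖ ^ 2) / 2 := by
    rw [norm_smul, norm_smul, Real.norm_of_nonneg (by norm_num)]
    linarith [parallelogram_law_with_norm ℝ x y]
  rw [← sq_rpow, ← sq_rpow (_ • (x - y)), ← sq_rpow x, ← sq_rpow y]
  calc _ ≤ (‖(2⁻¹ : ℝ) • (x + y)‖ ^ 2 + ‖(2⁻¹ : ℝ) • (x - y)‖ ^ 2) ^ (p / 2) :=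
        Real.add_rpow_le_rpow_add (sq_nonneg _) (sq_nonneg _) hp2
    _ = ((‖x‖ ^ 2 + ‖y‖ ^ 2) / 2) ^ (p / 2) := by rw [parallelogram]
    _ ≤ _ := half_add_rpow_le hp2 (sq_nonneg _) (sq_nonneg _)

/-- The Bregman divergence from `y` to `x` of the function `‖·‖ ^ p`, whose gradient at `y` is
`p ‖y‖ ^ (p - 2) y`: the error at `x` of its first-order expansion at `y`. It is meant for `1 < p`,
where it is nonnegative. -/
def normRpowBregman (p : ℝ) (x y : E) : ℝ :=
  ‖x‖ ^ p - ‖y‖ ^ p - p * ‖y‖ ^ (p - 2) * ⟪y, x - y⟫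

namespace normRpowBregman

lemma nonneg (hp : 1 < p) (x y : E) : 0 ≤ normRpowBregman p x y := by
  have hgrad : p * ‖y‖ ^ (p - 2) * ⟪y, x - y⟫ ≤ p * ‖y‖ ^ (p - 1) * (‖x‖ - ‖y‖) :=
    calc p * ‖y‖ ^ (p - 2) * ⟪y, x - y⟫
        = p * ‖y‖ ^ (p - 2) * (⟪y, x⟫ - ‖y‖ ^ 2) := by
          rw [inner_sub_right, real_inner_self_eq_norm_sq]
      _ ≤ p * ‖y‖ ^ (p - 2) * (‖y‖ * ‖x‖ - ‖y‖ ^ 2) := by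
          gcongr
          exact real_inner_le_norm y x
      _ = p * ‖y‖ ^ (p - 1) * (‖x‖ - ‖y‖) := by
          rw [show p - 1 = p - 2 + 1 by ring, Real.rpow_add_one' (norm_nonneg y) (by linarith)]
          ring
  have tangent :=
    rpow_add_mul_rpow_sub_one_mul_sub_le_rpow hp.le (norm_nonneg y) (norm_nonneg x)
  rw [normRpowBregman]
  linarith

lemma two_rpow_mul_norm_sub_rpow_le (hp : 2 ≤ p) (x y : E) :
    2 ^ (1 - p) * ‖x - y‖ ^ p ≤ normRpowBregman p x y := by
  have clarkson := clarkson_norm_rpow_le hp x y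
  have hmid := nonneg (p := p) (by linarith) ((2⁻¹ : ℝ) • (x + y)) y
  have hsub : (2⁻¹ : ℝ) • (x + y) - y = (2⁻¹ : ℝ) • (x - y) := by module
  have hhalf : 2 ^ (1 - p) * ‖x - y‖ ^ p = 2 * ‖(2⁻¹ : ℝ) • (x - y)‖ ^ p := by
    rw [norm_smul, Real.norm_of_nonneg (by norm_num), Real.mul_rpow (by norm_num) (norm_nonneg _),
      Real.inv_rpow zero_le_two, Real.rpow_sub two_pos, Real.rpow_one]
    ring
  rw [normRpowBregman, hsub, inner_smul_right_eq_smul, smul_eq_mul] at hmid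
  rw [hhalf, normRpowBregman]
  linarith

lemma add_swap (p : ℝ) (x y : E) :
    normRpowBregman p x y + normRpowBregman p y x
      = p * ⟪‖x‖ ^ (p - 2) • x - ‖y‖ ^ (p - 2) • y, x - y⟫ := by
  simp only [normRpowBregman, inner_sub_left, inner_sub_right, real_inner_smul_left]
  ring

lemma le_mul_max_rpow_mul_norm_sub_sq (hp : 2 ≤ p) (x y : E) :
    normRpowBregman p x y ≤ p * (p - 1) * max ‖x‖ ‖y‖ ^ (p - 2) * ‖x - y‖ ^ 2 := by
  have hlip := norm_rpow_smul_sub_norm_rpow_smul_le (r := p - 2) (by linarith) x y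
  calc normRpowBregman p x y ≤ normRpowBregman p x y + normRpowBregman p y x :=
        le_add_of_nonneg_right (nonneg (by linarith) y x)
    _ = p * ⟪‖x‖ ^ (p - 2) • x - ‖y‖ ^ (p - 2) • y, x - y⟫ := add_swap p x y
    _ ≤ p * (‖‖x‖ ^ (p - 2) • x - ‖y‖ ^ (p - 2) • y‖ * ‖x - y‖) := by
        gcongr
        exact real_inner_le_norm _ _
    _ ≤ p * ((p - 2 + 1) * max ‖x‖ ‖y‖ ^ (p - 2) * ‖x - y‖ * ‖x - y‖) := by gcongr
    _ = p * (p - 1) * max ‖x‖ ‖y‖ ^ (p - 2) * ‖x - y‖ ^ 2 := by ring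

lemma rpow_mul_le_of_mul_norm_le (hp : 2 ≤ p) {s R : ℝ} {x y : E} (hs : 0 ≤ s)
    (hx : s * ‖x‖ ≤ R) (hy : s * ‖y‖ ≤ R) :
    s ^ (p - 2) * normRpowBregman p x y ≤ p * (p - 1) * R ^ (p - 2) * ‖x - y‖ ^ 2 := by
  have hmax : 0 ≤ max ‖x‖ ‖y‖ := (norm_nonneg x).trans (le_max_left _ _)
  have hpow : s ^ (p - 2) * max ‖x‖ ‖y‖ ^ (p - 2) ≤ R ^ (p - 2) := by
    rw [← Real.mul_rpow hs hmax]
    refine Real.rpow_le_rpow (mul_nonneg hs hmax) ?_ (by linarith)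
    rw [mul_max_of_nonneg _ _ hs]
    exact max_le hx hy
  have hconst : 0 ≤ p * (p - 1) := mul_nonneg (by linarith) (by linarith)
  calc s ^ (p - 2) * normRpowBregman p x y
      ≤ s ^ (p - 2) * (p * (p - 1) * max ‖x‖ ‖y‖ ^ (p - 2) * ‖x - y‖ ^ 2) := by
        gcongr
        exact le_mul_max_rpow_mul_norm_sub_sq hp x y
    _ = p * (p - 1) * (s ^ (p - 2) * max ‖x‖ ‖y‖ ^ (p - 2)) * ‖x - y‖ ^ 2 := by ring
    _ ≤ p * (p - 1) * R ^ (p - 2) * ‖x - y‖ ^ 2 := by gcongr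

end normRpowBregman

open normRpowBregman

lemma norm_sub_smul_rpow_sub_eq_normRpowBregman_add (hp : 1 < p) (ht1 : t ≤ 1) (z e : E) :
    ‖z - t • e‖ ^ p - (1 - t) ^ (p - 1) * (‖z‖ ^ p - t * ‖e‖ ^ p)
      = normRpowBregman p (z - t • e) ((1 - t) • z)
        + t * (1 - t) ^ (p - 1) * normRpowBregman p e z := by
  have hs : 0 ≤ 1 - t := sub_nonneg.2 ht1
  have hpow : (1 - t) ^ p = (1 - t) ^ (p - 1) * (1 - t) := by
    rw [← Real.rpow_add_one' hs (by linarith), sub_add_cancel]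
  have hpow' : (1 - t) ^ (p - 1) = (1 - t) ^ (p - 2) * (1 - t) := by
    rw [← Real.rpow_add_one' hs (by linarith)]
    congr 1
    ring
  have hsub : z - t • e - (1 - t) • z = t • (z - e) := by module
  have hgrad : ‖(1 - t) • z‖ ^ (p - 2) * ⟪(1 - t) • z, t • (z - e)⟫
      = -(t * (1 - t) ^ (p - 1) * (‖z‖ ^ (p - 2) * ⟪z, e - z⟫)) := by
    rw [norm_smul, Real.norm_of_nonneg hs, Real.mul_rpow hs (norm_nonneg z),
      real_inner_smul_left, real_inner_smul_right, ← neg_sub e z, inner_neg_right, hpow']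
    ring
  rw [normRpowBregman, normRpowBregman, hsub, mul_assoc p, hgrad, norm_smul,
    Real.norm_of_nonneg hs, Real.mul_rpow hs (norm_nonneg z), hpow]
  ring

lemma mul_norm_sub_rpow_le_norm_sub_smul_rpow_sub (hp : 2 ≤ p) (ht : 0 ≤ t) (ht1 : t ≤ 1)
    (z e : E) :
    2 ^ (3 - 2 * p) * (t * ‖z - e‖ ^ p)
      ≤ ‖z - t • e‖ ^ p - (1 - t) ^ (p - 1) * (‖z‖ ^ p - t * ‖e‖ ^ p) := by
  have : 0 ≤ 1 - t := sub_nonneg.2 ht1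
  have hsub : z - t • e - (1 - t) • z = t • (z - e) := by module
  have htp : t ^ p = t * t ^ (p - 1) := by
    rw [mul_comm, ← Real.rpow_add_one' ht (by linarith), sub_add_cancel]
  rw [norm_sub_smul_rpow_sub_eq_normRpowBregman_add (by linarith) ht1]
  calc 2 ^ (3 - 2 * p) * (t * ‖z - e‖ ^ p)
      = 2 ^ (1 - p) * (t * 2 ^ (1 - (p - 1)) * ‖z - e‖ ^ p) := by
        rw [show 3 - 2 * p = 1 - p + (1 - (p - 1)) by ring, Real.rpow_add two_pos]
        ring
    _ ≤ 2 ^ (1 - p) * (t * (t ^ (p - 1) + (1 - t) ^ (p - 1)) * ‖z - e‖ ^ p) := by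
        gcongr
        exact two_rpow_one_sub_le_rpow_add_one_sub_rpow (by linarith) ht ht1
    _ = 2 ^ (1 - p) * ‖z - t • e - (1 - t) • z‖ ^ p
          + t * (1 - t) ^ (p - 1) * (2 ^ (1 - p) * ‖e - z‖ ^ p) := by
        rw [hsub, norm_smul, Real.norm_of_nonneg ht, Real.mul_rpow ht (norm_nonneg _), htp,
          norm_sub_rev e z]
        ring
    _ ≤ normRpowBregman p (z - t • e) ((1 - t) • z)
          + t * (1 - t) ^ (p - 1) * normRpowBregman p e z := by
        gcongr <;> exact two_rpow_mul_norm_sub_rpow_le hp _ _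

lemma one_sub_mul_norm_le_norm_sub_smul_add (ht : 0 ≤ t) (ht1 : t ≤ 1) (z e : E) :
    (1 - t) * ‖z‖ ≤ ‖z - t • e‖ + (1 - t) * ‖e‖ := by
  have hs : 0 ≤ 1 - t := sub_nonneg.2 ht1
  have htri : ‖z‖ ≤ ‖z - t • e‖ + t * ‖e‖ := by
    simpa [norm_smul, abs_of_nonneg ht] using norm_add_le (z - t • e) (t • e)
  calc (1 - t) * ‖z‖ ≤ (1 - t) * ‖z - t • e‖ + t * ((1 - t) * ‖e‖) := by
        grw [htri]
        exact le_of_eq (by ring)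
    _ ≤ 1 * ‖z - t • e‖ + 1 * ((1 - t) * ‖e‖) := by
        gcongr
        linarith
    _ = ‖z - t • e‖ + (1 - t) * ‖e‖ := by ring

lemma norm_sub_smul_rpow_sub_le_mul_norm_sub_sq (hp : 2 ≤ p) (ht : 0 ≤ t) (ht1 : t ≤ 1) (z e : E) :
    ‖z - t • e‖ ^ p - (1 - t) ^ (p - 1) * (‖z‖ ^ p - t * ‖e‖ ^ p)
      ≤ p * (p - 1) * (t * ‖z - e‖ ^ 2 * (‖z - t • e‖ + (1 - t) * ‖e‖) ^ (p - 2)) := by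
  have hs : 0 ≤ 1 - t := sub_nonneg.2 ht1
  have hsub : z - t • e - (1 - t) • z = t • (z - e) := by module
  have hpow : (1 - t) ^ (p - 1) = (1 - t) * (1 - t) ^ (p - 2) := by
    rw [mul_comm, ← Real.rpow_add_one' hs (by linarith)]
    congr 1
    ring
  set R := ‖z - t • e‖ + (1 - t) * ‖e‖
  have hz : (1 - t) * ‖z‖ ≤ R := one_sub_mul_norm_le_norm_sub_smul_add ht ht1 z e
  have hzt : ‖z - t • e‖ ≤ R := le_add_of_nonneg_right (by positivity)
  have he : (1 - t) * ‖e‖ ≤ R := le_add_of_nonneg_left (by positivity)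
  have hfst : normRpowBregman p (z - t • e) ((1 - t) • z)
      ≤ p * (p - 1) * R ^ (p - 2) * (t * ‖z - e‖) ^ 2 := by
    have h := rpow_mul_le_of_mul_norm_le (x := z - t • e) (y := (1 - t) • z) (R := R) hp
      zero_le_one (by rwa [one_mul]) (by rwa [one_mul, norm_smul, Real.norm_of_nonneg hs])
    rwa [Real.one_rpow, one_mul, hsub, norm_smul, Real.norm_of_nonneg ht] at h
  have hsnd := rpow_mul_le_of_mul_norm_le hp hs he hz
  rw [norm_sub_smul_rpow_sub_eq_normRpowBregman_add (by linarith) ht1]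
  calc normRpowBregman p (z - t • e) ((1 - t) • z)
        + t * (1 - t) ^ (p - 1) * normRpowBregman p e z
      = normRpowBregman p (z - t • e) ((1 - t) • z)
        + t * (1 - t) * ((1 - t) ^ (p - 2) * normRpowBregman p e z) := by rw [hpow]; ring
    _ ≤ p * (p - 1) * R ^ (p - 2) * (t * ‖z - e‖) ^ 2
        + t * (1 - t) * (p * (p - 1) * R ^ (p - 2) * ‖e - z‖ ^ 2) := by gcongr
    _ = p * (p - 1) * (t * ‖z - e‖ ^ 2 * R ^ (p - 2)) := by rw [norm_sub_rev e z]; ring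

theorem stmt_2_general (hp : 2 ≤ p) (ht : 0 ≤ t) (ht1 : t ≤ 1) (z e : E) :
    2 ^ (3 - 2 * p) * (t * ‖z - e‖ ^ p)
        ≤ ‖z - t • e‖ ^ p - (1 - t) ^ (p - 1) * (‖z‖ ^ p - t * ‖e‖ ^ p)
      ∧ ‖z - t • e‖ ^ p - (1 - t) ^ (p - 1) * (‖z‖ ^ p - t * ‖e‖ ^ p)
        ≤ p * (p - 1) * (t * ‖z - e‖ ^ 2 * (‖z - t • e‖ + (1 - t) * ‖e‖) ^ (p - 2)) :=
  ⟨mul_norm_sub_rpow_le_norm_sub_smul_rpow_sub hp ht ht1 z e,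
    norm_sub_smul_rpow_sub_le_mul_norm_sub_sq hp ht ht1 z e⟩

end InnerProductSpace

/-- Lemma 3.1, case `p > 2`.
There exist constants `c, C > 0` depending only on `p` such that for all `t ∈ [0,1]`
and all `z ∈ ℂ`:
`c t^{p/2} |z-1|^p ≤ |z-t|^p - (1-t)^{p-1} (|z|^p - t) ≤ C t |z-1|² (|z-t| + 1 - t)^{p-2}`. -/
theorem stmt_2 (p : ℝ) (hp : 2 < p) :
    ∃ c C : ℝ, 0 < c ∧ 0 < C ∧
      ∀ (t : ℝ), 0 ≤ t → t ≤ 1 → ∀ z : ℂ,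
        c * (t ^ (p / 2) * ‖z - 1‖ ^ p)
            ≤ ‖z - (t : ℂ)‖ ^ p - (1 - t) ^ (p - 1) * (‖z‖ ^ p - t)
          ∧ ‖z - (t : ℂ)‖ ^ p - (1 - t) ^ (p - 1) * (‖z‖ ^ p - t)
            ≤ C * (t * ‖z - 1‖ ^ (2 : ℝ) * (‖z - (t : ℂ)‖ + 1 - t) ^ (p - 2)) := by
  refine ⟨2 ^ (3 - 2 * p), p * (p - 1), by positivity, mul_pos (by linarith) (by linarith),
    fun t ht ht1 z => ?_⟩
  obtain ⟨hlower, hupper⟩ := stmt_2_general hp.le ht ht1 z 1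
  have ht_rpow : t ^ (p / 2) ≤ t := Real.rpow_le_self_of_le_one ht ht1 (by linarith)
  simp only [Complex.real_smul, mul_one, norm_one, Real.one_rpow] at hlower hupper
  rw [Real.rpow_two, add_sub_assoc]
  exact ⟨by grw [ht_rpow]; exact hlower, hupper⟩
end
end

section
/- Let ℓ ∈ ℕ and p > 1. Suppose 𝔤 ∈ H^ℓ satisfies (A1): ∇^k 𝔤_n > 0 for all n ≥ ℓ and k ∈ {0,…,ℓ}, (A2): −Δ_p^{(ℓ−k)}∇^k 𝔤_n ≥ 0 for all n ≥ ℓ and k ∈ {1,…,ℓ−1}, and (A3): −Δ_p^{(ℓ)}𝔤_n ≥ 0 for all n ≥ ℓ. Set ρ(𝔤)_n := (−Δ_p^{(ℓ)}𝔤_n)/𝔤_n^{p−1}. If u ∈ H_0^ℓ satisfies ∑_{n=ℓ}^∞ |∇^ℓ u_n|^p = ∑_{n=ℓ}^∞ ρ(𝔤)_n·|u_n|^p, then u ≡ 0. -/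
open scoped BigOperators
open Finset Filter Asymptotics

noncomputable section

/-- Discrete gradient of a complex sequence: `(∇u)_n = u_n - u_{n-1}`. -/
def dgrad (u : ℤ → ℂ) : ℤ → ℂ := fun n => u n - u (n - 1)

/-- Discrete divergence of a complex sequence: `(div u)_n = u_{n+1} - u_n`. -/
def ddiv (u : ℤ → ℂ) : ℤ → ℂ := fun n => u (n + 1) - u n

/-- Discrete gradient of a real sequence. -/
def rgrad (g : ℤ → ℝ) : ℤ → ℝ := fun n => g n - g (n - 1)

/-- Discrete divergence of a real sequence. -/
def rdiv (g : ℤ → ℝ) : ℤ → ℝ := fun n => g (n + 1) - g n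

/-- `v^⟨a⟩ := v * |v|^(a-1)`, with `0^⟨a⟩ = 0`. -/
def sgnPow (a v : ℝ) : ℝ := v * |v| ^ (a - 1)

/-- The discrete `p`-Laplacian of order `m`:
`(-Δ_p^{(m)} g)_n = (-1)^m (div^m ((∇^m g)^⟨p-1⟩))_n`. -/
def pLap (p : ℝ) (m : ℕ) (g : ℤ → ℝ) : ℤ → ℝ :=
  fun n => (-1 : ℝ) ^ m * rdiv^[m] (fun k => sgnPow (p - 1) (rgrad^[m] g k)) n

/-- The remainder term `R(s; g, u)_n` (the exponent `p` is a separate parameter). -/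
def Rem (p s : ℝ) (g : ℤ → ℝ) (u : ℤ → ℂ) (n : ℤ) : ℝ :=
  if s ≤ 2 then
    ‖(Real.sqrt (g n / g (n + 1)) : ℂ) * u (n + 1)
        - (Real.sqrt (g (n + 1) / g n) : ℂ) * u n‖ ^ p
  else
    ‖(Real.sqrt (g n / g (n + 1)) : ℂ) * u (n + 1)
        - (Real.sqrt (g (n + 1) / g n) : ℂ) * u n‖ ^ (2 : ℝ)
      * (‖ddiv u n‖ + ‖u n‖ / g n * rdiv g n) ^ (p - 2)

/-- `∑_{n=a}^∞ f(n)` as a `tsum` over `ℕ`. -/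
def tsumFrom (a : ℤ) (f : ℤ → ℝ) : ℝ := ∑' n : ℕ, f (a + n)

/-!
Put `h = ∇^k g` and `v = ∇^k u` with `k < ℓ`. Since `(x, s) ↦ ‖x‖ ^ p / s ^ (p - 1)` is the
perspective of the convex function `‖·‖ ^ p`, it is subadditive, so `‖v‖ ^ p / h ^ (p - 1)` grows
from `n - 1` to `n` by at most `‖∇v‖ ^ p / (∇h) ^ (p - 1)` at `n`. Multiplying by the nonnegative
weight `-Δ_p^{(ℓ-k-1)} ∇h` and summing by parts turns this into one link of the chain
`∑ ρ(g) ‖u‖ ^ p ≤ … ≤ ∑ ρ(∇^k g) ‖∇^k u‖ ^ p ≤ … ≤ ∑ ‖∇^ℓ u‖ ^ p`, where the order of the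
`p`-Laplacian in `ρ(∇^k g)` is `ℓ - k`. Equality forces equality in the last link, whose weight
`(∇^ℓ g) ^ (p - 1)` is positive; strict convexity then makes `∇^{ℓ-1} u` a multiple of the positive
sequence `∇^{ℓ-1} g`, and having finite support it must vanish.
-/

section Perspective

variable {E : Type*} [NormedAddCommGroup E] [NormedSpace ℝ E] {p s t : ℝ}

lemma convexOn_norm_rpow (hp : 1 ≤ p) : ConvexOn ℝ Set.univ fun x : E => ‖x‖ ^ p := by
  refine ⟨convex_univ, fun x _ y _ a b ha hb hab => ?_⟩
  calc ‖a • x + b • y‖ ^ p ≤ (a • ‖x‖ + b • ‖y‖) ^ p := by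
        gcongr
        exact convexOn_univ_norm.2 trivial trivial ha hb hab
    _ ≤ a • ‖x‖ ^ p + b • ‖y‖ ^ p :=
        (convexOn_rpow hp).2 (norm_nonneg x) (norm_nonneg y) ha hb hab

lemma strictConvexOn_norm_rpow [StrictConvexSpace ℝ E] (hp : 1 < p) :
    StrictConvexOn ℝ Set.univ fun x : E => ‖x‖ ^ p := by
  refine ⟨convex_univ, fun x _ y _ hxy a b ha hb hab => ?_⟩
  rcases eq_or_ne ‖x‖ ‖y‖ with heq | hne
  · have hlt : ‖a • x + b • y‖ < ‖y‖ := norm_combo_lt_of_ne heq.le le_rfl hxy ha hb hab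
    simpa only [heq, ← add_smul, hab, one_smul] using
      Real.rpow_lt_rpow (norm_nonneg _) hlt (zero_lt_one.trans hp)
  · calc ‖a • x + b • y‖ ^ p ≤ (a • ‖x‖ + b • ‖y‖) ^ p := by
          gcongr
          exact convexOn_univ_norm.2 trivial trivial ha.le hb.le hab
      _ < a • ‖x‖ ^ p + b • ‖y‖ ^ p :=
          (strictConvexOn_rpow hp).2 (norm_nonneg x) (norm_nonneg y) hne ha hb hab

lemma norm_rpow_div_rpow_sub_one (hs : 0 < s) (x : E) :
    ‖x‖ ^ p / s ^ (p - 1) = s * ‖s⁻¹ • x‖ ^ p := by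
  rw [norm_smul_of_nonneg (inv_nonneg.2 hs.le), Real.mul_rpow (inv_nonneg.2 hs.le) (norm_nonneg x),
    Real.inv_rpow hs.le, Real.rpow_sub_one hs.ne']
  field_simp

lemma inv_add_smul_add_eq {V : Type*} [AddCommGroup V] [Module ℝ V] (hs : 0 < s) (ht : 0 < t)
    (x y : V) :
    (s + t)⁻¹ • (x + y) = (s / (s + t)) • s⁻¹ • x + (t / (s + t)) • t⁻¹ • y := by
  simp only [smul_smul, smul_add]
  congr 2 <;> field_simp

lemma norm_add_rpow_div_le (hp : 1 ≤ p) (hs : 0 < s) (ht : 0 < t) (x y : E) :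
    ‖x + y‖ ^ p / (s + t) ^ (p - 1) ≤ ‖x‖ ^ p / s ^ (p - 1) + ‖y‖ ^ p / t ^ (p - 1) := by
  have hst : 0 < s + t := add_pos hs ht
  rw [norm_rpow_div_rpow_sub_one hst, norm_rpow_div_rpow_sub_one hs,
    norm_rpow_div_rpow_sub_one ht, inv_add_smul_add_eq hs ht]
  calc _ ≤ (s + t) * (s / (s + t) * ‖s⁻¹ • x‖ ^ p + t / (s + t) * ‖t⁻¹ • y‖ ^ p) := by
        gcongr
        exact (convexOn_norm_rpow hp).2 trivial trivial (by positivity) (by positivity)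
          (by field_simp)
    _ = s * ‖s⁻¹ • x‖ ^ p + t * ‖t⁻¹ • y‖ ^ p := by field_simp

lemma inv_smul_eq_of_norm_add_rpow_div_eq [StrictConvexSpace ℝ E] (hp : 1 < p) (hs : 0 < s)
    (ht : 0 < t) {x y : E}
    (h : ‖x + y‖ ^ p / (s + t) ^ (p - 1) = ‖x‖ ^ p / s ^ (p - 1) + ‖y‖ ^ p / t ^ (p - 1)) :
    s⁻¹ • x = t⁻¹ • y := by
  have hst : 0 < s + t := add_pos hs ht
  by_contra hne
  rw [norm_rpow_div_rpow_sub_one hst, norm_rpow_div_rpow_sub_one hs,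
    norm_rpow_div_rpow_sub_one ht, inv_add_smul_add_eq hs ht] at h
  refine h.not_lt ?_
  calc _ < (s + t) * (s / (s + t) * ‖s⁻¹ • x‖ ^ p + t / (s + t) * ‖t⁻¹ • y‖ ^ p) := by
        gcongr
        exact (strictConvexOn_norm_rpow hp).2 trivial trivial hne (by positivity) (by positivity)
          (by field_simp)
    _ = s * ‖s⁻¹ • x‖ ^ p + t * ‖t⁻¹ • y‖ ^ p := by field_simp

end Perspective

section BackwardDifference

variable {A : Type*} [AddGroup A] {a : ℤ} {u : ℤ → A}

/-- The backward difference `n ↦ u n - u (n - 1)` of a sequence in an additive group. It unfolds to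
`rgrad` for real and to `dgrad` for complex sequences, and lemmas about it are applied to those. -/
def bwdDiff (u : ℤ → A) : ℤ → A := fun n => u n - u (n - 1)

lemma bwdDiff_eq_zero_of_lt (hu : ∀ n < a, u n = 0) : ∀ n < a, bwdDiff u n = 0 := fun n hn => by
  rw [bwdDiff, hu n hn, hu (n - 1) (by omega), sub_zero]

lemma iterate_bwdDiff_eq_zero_of_lt (hu : ∀ n < a, u n = 0) (k : ℕ) :
    ∀ n < a, bwdDiff^[k] u n = 0 := by
  induction k generalizing u with
  | zero => exact hu
  | succ _ ih => exact ih (bwdDiff_eq_zero_of_lt hu)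

lemma finite_support_bwdDiff (hu : u.support.Finite) : (bwdDiff u).support.Finite := by
  refine (hu.union (hu.preimage (sub_left_injective (b := (1 : ℤ))).injOn)).subset fun n hn => ?_
  contrapose! hn
  simp_all [bwdDiff]

lemma finite_support_iterate_bwdDiff (hu : u.support.Finite) (k : ℕ) :
    (bwdDiff^[k] u).support.Finite := by
  induction k generalizing u with
  | zero => exact hu
  | succ _ ih => exact ih (finite_support_bwdDiff hu)

lemma eq_zero_of_bwdDiff_eq_zero (hu : ∀ n < a, u n = 0) (h : bwdDiff u = 0) : u = 0 := by
  funext n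
  rcases lt_or_ge n a with hn | hn
  · exact hu n hn
  · induction n, hn using Int.leInduction with
    | base => simpa [bwdDiff, hu (a - 1) (by omega)] using congrFun h a
    | succ n _ ih => simpa [bwdDiff, ih] using congrFun h (n + 1)

lemma eq_zero_of_iterate_bwdDiff_eq_zero (hu : ∀ n < a, u n = 0) (k : ℕ)
    (h : bwdDiff^[k] u = 0) : u = 0 := by
  induction k generalizing u with
  | zero => exact h
  | succ k ih => exact eq_zero_of_bwdDiff_eq_zero hu (ih (bwdDiff_eq_zero_of_lt hu) h)

lemma pos_of_rgrad_pos {h : ℤ → ℝ} (hh : ∀ n < a, h n = 0) (hgrad : ∀ n, a ≤ n → 0 < rgrad h n) :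
    ∀ n, a ≤ n → 0 < h n := fun n hn => by
  induction n, hn using Int.leInduction with
  | base => simpa [rgrad, hh (a - 1) (by omega)] using hgrad a le_rfl
  | succ n hn ih =>
    have := hgrad (n + 1) (by omega)
    rw [rgrad, add_sub_cancel_right] at this
    linarith

lemma pos_of_iterate_rgrad_pos {h : ℤ → ℝ} (hh : ∀ n < a, h n = 0) {k : ℕ}
    (hgrad : ∀ n, a ≤ n → 0 < rgrad^[k] h n) : ∀ n, a ≤ n → 0 < h n := by
  induction k generalizing h with
  | zero => exact hgrad
  | succ k ih => exact pos_of_rgrad_pos hh (ih (bwdDiff_eq_zero_of_lt hh) hgrad)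

lemma eq_zero_of_finite_support_of_imp_pred {M : Type*} [Zero M] {v : ℤ → M}
    (hfin : v.support.Finite) (hback : ∀ n, v n = 0 → v (n - 1) = 0) : v = 0 := by
  by_contra hne
  obtain ⟨n, hn⟩ := hfin.exists_maximal (Function.support_nonempty_iff.2 hne)
  have hsucc : v (n + 1) = 0 := by
    by_contra h
    have := hn.le_of_ge h (by omega)
    omega
  exact hn.prop (by simpa using hback (n + 1) hsucc)

end BackwardDifference

section TsumFrom

variable {a : ℤ} {f g : ℤ → ℝ}

lemma summable_add_natCast (hf : f.support.Finite) (a : ℤ) : Summable fun n : ℕ => f (a + n) :=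
  summable_of_hasFiniteSupport <|
    hf.preimage ((add_right_injective a).comp Nat.cast_injective).injOn

lemma tsumFrom_congr (h : ∀ n, a ≤ n → f n = g n) : tsumFrom a f = tsumFrom a g :=
  tsum_congr fun i => h (a + i) (by omega)

lemma tsumFrom_le_tsumFrom (hf : f.support.Finite) (hg : g.support.Finite)
    (h : ∀ n, a ≤ n → f n ≤ g n) : tsumFrom a f ≤ tsumFrom a g :=
  (summable_add_natCast hf a).tsum_le_tsum (fun i => h (a + i) (by omega))
    (summable_add_natCast hg a)

lemma eq_of_tsumFrom_le (hf : f.support.Finite) (hg : g.support.Finite)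
    (h : ∀ n, a ≤ n → f n ≤ g n) (hle : tsumFrom a g ≤ tsumFrom a f) {n : ℤ} (hn : a ≤ n) :
    f n = g n := by
  obtain ⟨i, rfl⟩ := Int.le.dest hn
  refine (h _ hn).eq_of_not_lt fun hlt => hle.not_gt ?_
  exact Summable.tsum_lt_tsum (fun j => h (a + j) (by omega)) hlt (summable_add_natCast hf a)
    (summable_add_natCast hg a)

lemma finite_support_mul_left (W : ℤ → ℝ) (hf : f.support.Finite) :
    (fun n => W n * f n).support.Finite :=
  hf.subset (Function.support_mul_subset_right W f)

lemma tsumFrom_sub_mul (W : ℤ → ℝ) {F : ℤ → ℝ} (hF : F.support.Finite) (ha : F (a - 1) = 0) :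
    tsumFrom a (fun n => (W n - W (n + 1)) * F n)
      = tsumFrom a (fun n => W n * (F n - F (n - 1))) := by
  have hW := summable_add_natCast (finite_support_mul_left W hF) a
  have hsucc := summable_add_natCast (finite_support_mul_left (fun n => W (n + 1)) hF) a
  have hpred : Summable fun i : ℕ => W (a + i) * F (a + i - 1) := by
    rw [← summable_nat_add_iff 1]
    simpa [← add_assoc] using hsucc
  have hshift : ∑' i : ℕ, W (a + i) * F (a + i - 1) = ∑' i : ℕ, W (a + i + 1) * F (a + i) := by
    rw [hpred.tsum_eq_zero_add]
    simp [ha, ← add_assoc]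
  simp only [tsumFrom, sub_mul, mul_sub]
  rw [hW.tsum_sub hsucc, hW.tsum_sub hpred, hshift]

end TsumFrom

section Picone

variable {E : Type*} [NormedAddCommGroup E] {p : ℝ} {a n : ℤ} {h : ℤ → ℝ} {v : ℤ → E}

/-- The sequence `‖v‖ ^ p / h ^ (p - 1)` of Picone's inequality. For `p ≠ 0` it vanishes where
`v` does, even at zeros of `h`. -/
def piconeQuotient (p : ℝ) (h : ℤ → ℝ) (v : ℤ → E) (n : ℤ) : ℝ := ‖v n‖ ^ p / h n ^ (p - 1)

lemma piconeQuotient_eq_zero (hp : p ≠ 0) (hv : v n = 0) : piconeQuotient p h v n = 0 := by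
  simp [piconeQuotient, hv, Real.zero_rpow hp]

lemma finite_support_piconeQuotient (hp : p ≠ 0) (hv : v.support.Finite) :
    (piconeQuotient p h v).support.Finite :=
  hv.subset fun _ hn hvn => hn (piconeQuotient_eq_zero hp hvn)

variable [NormedSpace ℝ E]

lemma piconeQuotient_sub_le (hp : 1 ≤ p) (hh : ∀ m < a, h m = 0) (hv : ∀ m < a, v m = 0)
    (hgrad : ∀ m, a ≤ m → 0 < rgrad h m) (hn : a ≤ n) :
    piconeQuotient p h v n - piconeQuotient p h v (n - 1)
      ≤ piconeQuotient p (rgrad h) (bwdDiff v) n := by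
  rcases hn.eq_or_lt with rfl | hlt
  · rw [piconeQuotient_eq_zero (by linarith) (hv (a - 1) (by omega))]
    simp [piconeQuotient, rgrad, bwdDiff, hh (a - 1) (by omega), hv (a - 1) (by omega)]
  · have hprev : 0 < h (n - 1) := pos_of_rgrad_pos hh hgrad (n - 1) (by omega)
    have := norm_add_rpow_div_le hp hprev (hgrad n hn) (v (n - 1)) (bwdDiff v n)
    simp only [rgrad, bwdDiff, add_sub_cancel] at this
    simp only [piconeQuotient, rgrad, bwdDiff]
    linarith

lemma smul_eq_smul_of_piconeQuotient_sub_eq [StrictConvexSpace ℝ E] (hp : 1 < p)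
    (hprev : 0 < h (n - 1)) (hgrad : 0 < rgrad h n)
    (heq : piconeQuotient p h v n - piconeQuotient p h v (n - 1)
      = piconeQuotient p (rgrad h) (bwdDiff v) n) :
    h n • v (n - 1) = h (n - 1) • v n := by
  have hratio : (h (n - 1))⁻¹ • v (n - 1) = (rgrad h n)⁻¹ • bwdDiff v n := by
    refine inv_smul_eq_of_norm_add_rpow_div_eq hp hprev hgrad ?_
    simp only [piconeQuotient, rgrad, bwdDiff] at heq
    simp only [rgrad, bwdDiff, add_sub_cancel]
    linarith
  have hcross : rgrad h n • v (n - 1) = h (n - 1) • bwdDiff v n := by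
    rwa [inv_smul_eq_iff₀ hprev.ne', smul_comm, eq_inv_smul_iff₀ hgrad.ne'] at hratio
  rw [rgrad, bwdDiff, sub_smul, smul_sub] at hcross
  exact sub_left_injective hcross

end Picone

section Hardy

variable {E : Type*} [NormedAddCommGroup E] {p : ℝ} {a : ℤ} {h : ℤ → ℝ} {v : ℤ → E}

/-- The weighted sum `∑_{n ≥ a} ρ_n ‖v_n‖ ^ p` with the Hardy weight
`ρ = (-Δ_p^{(m)} h) / h ^ (p - 1)` of order `m`; for `m = 0` and positive `h` the weight is `1`. -/
def hardySum (p : ℝ) (a : ℤ) (m : ℕ) (h : ℤ → ℝ) (v : ℤ → E) : ℝ :=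
  tsumFrom a fun n => pLap p m h n / h n ^ (p - 1) * ‖v n‖ ^ p

lemma pLap_succ (p : ℝ) (m : ℕ) (h : ℤ → ℝ) (n : ℤ) :
    pLap p (m + 1) h n = pLap p m (rgrad h) n - pLap p m (rgrad h) (n + 1) := by
  simp only [pLap, Function.iterate_succ_apply' rdiv, Function.iterate_succ_apply rgrad, rdiv,
    pow_succ]
  ring

lemma pLap_zero_of_pos {n : ℤ} (hn : 0 < h n) : pLap p 0 h n = h n ^ (p - 1) := by
  simp only [pLap, sgnPow, pow_zero, one_mul, Function.iterate_zero, id, abs_of_pos hn,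
    Real.rpow_sub_one hn.ne' (p - 1)]
  field_simp

lemma pLap_zero_pos {n : ℤ} (hn : 0 < h n) : 0 < pLap p 0 h n :=
  (pLap_zero_of_pos hn).symm ▸ Real.rpow_pos_of_pos hn _

lemma hardySum_zero (hpos : ∀ n, a ≤ n → 0 < h n) :
    hardySum p a 0 h v = tsumFrom a fun n => ‖v n‖ ^ p :=
  tsumFrom_congr fun n hn => by
    rw [pLap_zero_of_pos (hpos n hn), div_self (Real.rpow_pos_of_pos (hpos n hn) _).ne', one_mul]

lemma hardySum_eq_tsumFrom_mul_piconeQuotient (m : ℕ) :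
    hardySum p a m h v = tsumFrom a fun n => pLap p m h n * piconeQuotient p h v n :=
  tsumFrom_congr fun _ _ => by rw [piconeQuotient, div_mul_eq_mul_div, mul_div_assoc]

lemma hardySum_succ (hp : p ≠ 0) (hv : ∀ n < a, v n = 0) (hfin : v.support.Finite) (m : ℕ) :
    hardySum p a (m + 1) h v = tsumFrom a fun n =>
      pLap p m (rgrad h) n * (piconeQuotient p h v n - piconeQuotient p h v (n - 1)) := by
  simp only [hardySum_eq_tsumFrom_mul_piconeQuotient, pLap_succ]
  exact tsumFrom_sub_mul _ (finite_support_piconeQuotient hp hfin)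
    (piconeQuotient_eq_zero hp (hv (a - 1) (by omega)))

variable [NormedSpace ℝ E]

lemma hardySum_succ_le (hp : 1 ≤ p) (hh : ∀ n < a, h n = 0) (hv : ∀ n < a, v n = 0)
    (hfin : v.support.Finite) (hgrad : ∀ n, a ≤ n → 0 < rgrad h n) {m : ℕ}
    (hLap : ∀ n, a ≤ n → 0 ≤ pLap p m (rgrad h) n) :
    hardySum p a (m + 1) h v ≤ hardySum p a m (rgrad h) (bwdDiff v) := by
  have hp0 : p ≠ 0 := by linarith
  rw [hardySum_succ hp0 hv hfin, hardySum_eq_tsumFrom_mul_piconeQuotient]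
  exact tsumFrom_le_tsumFrom
    (finite_support_mul_left _ (finite_support_bwdDiff (finite_support_piconeQuotient hp0 hfin)))
    (finite_support_mul_left _ (finite_support_piconeQuotient hp0 (finite_support_bwdDiff hfin)))
    fun n hn => mul_le_mul_of_nonneg_left (piconeQuotient_sub_le hp hh hv hgrad hn) (hLap n hn)

lemma hardySum_add_le_iterate (hp : 1 ≤ p) (hh : ∀ n < a, h n = 0) (hv : ∀ n < a, v n = 0)
    (hfin : v.support.Finite) {m k : ℕ} (hgrad : ∀ n, a ≤ n → 0 < rgrad^[k] h n)
    (hLap : ∀ n, a ≤ n → ∀ j, 1 ≤ j → j ≤ k → 0 ≤ pLap p (m + k - j) (rgrad^[j] h) n) :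
    hardySum p a (m + k) h v ≤ hardySum p a m (rgrad^[k] h) (bwdDiff^[k] v) := by
  induction k generalizing h v with
  | zero => exact le_rfl
  | succ k ih =>
    have hh_grad : ∀ n < a, rgrad h n = 0 := bwdDiff_eq_zero_of_lt hh
    calc hardySum p a (m + k + 1) h v ≤ hardySum p a (m + k) (rgrad h) (bwdDiff v) :=
          hardySum_succ_le hp hh hv hfin (pos_of_iterate_rgrad_pos hh_grad hgrad) fun n hn =>
            hLap n hn 1 le_rfl (by omega)
      _ ≤ hardySum p a m (rgrad^[k + 1] h) (bwdDiff^[k + 1] v) :=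
          ih hh_grad (bwdDiff_eq_zero_of_lt hv) (finite_support_bwdDiff hfin) hgrad
            fun n hn j _ _ => by simpa only [← add_assoc, Nat.add_sub_add_right,
              Function.iterate_succ_apply] using hLap n hn (j + 1) (by omega) (by omega)

lemma piconeQuotient_sub_eq_of_hardySum_le (hp : 1 ≤ p) (hh : ∀ n < a, h n = 0)
    (hv : ∀ n < a, v n = 0) (hfin : v.support.Finite) (hgrad : ∀ n, a ≤ n → 0 < rgrad h n) {m : ℕ}
    (hLap : ∀ n, a ≤ n → 0 < pLap p m (rgrad h) n)
    (hle : hardySum p a m (rgrad h) (bwdDiff v) ≤ hardySum p a (m + 1) h v) {n : ℤ} (hn : a ≤ n) :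
    piconeQuotient p h v n - piconeQuotient p h v (n - 1)
      = piconeQuotient p (rgrad h) (bwdDiff v) n := by
  have hp0 : p ≠ 0 := by linarith
  rw [hardySum_succ hp0 hv hfin, hardySum_eq_tsumFrom_mul_piconeQuotient] at hle
  exact mul_left_cancel₀ (hLap n hn).ne' <| eq_of_tsumFrom_le
    (finite_support_mul_left _ (finite_support_bwdDiff (finite_support_piconeQuotient hp0 hfin)))
    (finite_support_mul_left _ (finite_support_piconeQuotient hp0 (finite_support_bwdDiff hfin)))
    (fun i hi => mul_le_mul_of_nonneg_left (piconeQuotient_sub_le hp hh hv hgrad hi)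
      (hLap i hi).le) hle hn

lemma eq_zero_of_hardySum_le [StrictConvexSpace ℝ E] (hp : 1 < p) (hh : ∀ n < a, h n = 0)
    (hv : ∀ n < a, v n = 0) (hfin : v.support.Finite) (hgrad : ∀ n, a ≤ n → 0 < rgrad h n) {m : ℕ}
    (hLap : ∀ n, a ≤ n → 0 < pLap p m (rgrad h) n)
    (hle : hardySum p a m (rgrad h) (bwdDiff v) ≤ hardySum p a (m + 1) h v) : v = 0 := by
  have hpos := pos_of_rgrad_pos hh hgrad
  refine eq_zero_of_finite_support_of_imp_pred hfin fun n hvn => ?_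
  rcases lt_or_ge (n - 1) a with hlt | hge
  · exact hv (n - 1) hlt
  · have hn : a ≤ n := by omega
    have hprop : h n • v (n - 1) = h (n - 1) • v n :=
      smul_eq_smul_of_piconeQuotient_sub_eq hp (hpos (n - 1) hge) (hgrad n hn)
        (piconeQuotient_sub_eq_of_hardySum_le hp.le hh hv hfin hgrad hLap hle hn)
    rw [hvn, smul_zero] at hprop
    exact (smul_eq_zero.1 hprop).resolve_left (hpos n hn).ne'

end Hardy

theorem stmt_5_general {E : Type*} [NormedAddCommGroup E] [NormedSpace ℝ E]
    [StrictConvexSpace ℝ E] {ℓ : ℕ} (hℓ : 0 < ℓ) {p : ℝ} (hp : 1 < p) {a : ℤ} {g : ℤ → ℝ}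
    (hg : ∀ n < a, g n = 0) (hgrad : ∀ n, a ≤ n → 0 < rgrad^[ℓ] g n)
    (hLap : ∀ n, a ≤ n → ∀ k, 1 ≤ k → k < ℓ → 0 ≤ pLap p (ℓ - k) (rgrad^[k] g) n)
    {u : ℤ → E} (hu : ∀ n < a, u n = 0) (hfin : u.support.Finite)
    (hle : tsumFrom a (fun n => ‖bwdDiff^[ℓ] u n‖ ^ p)
      ≤ tsumFrom a (fun n => pLap p ℓ g n / g n ^ (p - 1) * ‖u n‖ ^ p)) :
    u = 0 := by
  obtain ⟨k, rfl⟩ : ∃ k, ℓ = 1 + k := Nat.exists_eq_add_of_le hℓ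
  simp only [Nat.add_comm 1 k, Function.iterate_succ_apply'] at hgrad
  have hle_last : hardySum p a 0 (rgrad (rgrad^[k] g)) (bwdDiff (bwdDiff^[k] u))
      ≤ hardySum p a 1 (rgrad^[k] g) (bwdDiff^[k] u) :=
    calc hardySum p a 0 (rgrad (rgrad^[k] g)) (bwdDiff (bwdDiff^[k] u))
        = tsumFrom a fun n => ‖bwdDiff^[1 + k] u n‖ ^ p := by
          rw [hardySum_zero hgrad, add_comm, Function.iterate_succ_apply']
      _ ≤ hardySum p a (1 + k) g u := hle
      _ ≤ hardySum p a 1 (rgrad^[k] g) (bwdDiff^[k] u) :=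
          hardySum_add_le_iterate hp.le hg hu hfin
            (pos_of_rgrad_pos (iterate_bwdDiff_eq_zero_of_lt hg k) hgrad)
            fun n hn j hj hjk => hLap n hn j hj (by omega)
  exact eq_zero_of_iterate_bwdDiff_eq_zero hu k <|
    eq_zero_of_hardySum_le hp (iterate_bwdDiff_eq_zero_of_lt hg k)
      (iterate_bwdDiff_eq_zero_of_lt hu k) (finite_support_iterate_bwdDiff hfin k) hgrad
      (fun n hn => pLap_zero_pos (hgrad n hn)) hle_last

/-- Theorem 2.4, second part: non-attainability in `H_0^ℓ`.
Under assumptions (A1), (A2), (A3) on `𝔤 ∈ H^ℓ`, if `u ∈ H_0^ℓ` attains equality in the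
inequality `∑_{n≥ℓ} |∇^ℓ u_n|^p ≥ ∑_{n≥ℓ} ρ(𝔤)_n |u_n|^p`, then `u ≡ 0`. -/
theorem stmt_5 (ℓ : ℕ) (hℓ : 0 < ℓ) (p : ℝ) (hp : 1 < p) (g : ℤ → ℝ)
    (hH : ∀ n : ℤ, n < (ℓ : ℤ) → g n = 0)
    (hA1 : ∀ n : ℤ, (ℓ : ℤ) ≤ n → ∀ k : ℕ, k ≤ ℓ → 0 < rgrad^[k] g n)
    (hA2 : ∀ n : ℤ, (ℓ : ℤ) ≤ n → ∀ k : ℕ, 1 ≤ k → k < ℓ →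
        0 ≤ pLap p (ℓ - k) (rgrad^[k] g) n)
    (hA3 : ∀ n : ℤ, (ℓ : ℤ) ≤ n → 0 ≤ pLap p ℓ g n) :
    ∀ u : ℤ → ℂ,
      (∀ n : ℤ, n < (ℓ : ℤ) → u n = 0) →
      (Function.support u).Finite →
      tsumFrom ℓ (fun n => ‖dgrad^[ℓ] u n‖ ^ p)
        = tsumFrom ℓ (fun n => pLap p ℓ g n / g n ^ (p - 1) * ‖u n‖ ^ p) →
      ∀ n : ℤ, u n = 0 := by
  intro u hu hfin heq
  exact congrFun (stmt_5_general hℓ hp hH (fun n hn => hA1 n hn ℓ le_rfl) hA2 hu hfin heq.le)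
end
end
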